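/- arXiv:2001.09940 — 5 statements merged into one kernel-verified Lean document; each statement's English description precedes it below -/
import Mathlib

section
/- Let p : E → B be an exponentiable arrow in a cartesian category C and let P_p = B_! ∘ p_* ∘ E* be the associated polynomial functor, with: leg_X : P_p X → B the structure arrow of p_* E* X; counit ε_X : P_p X ×_B E → X of the adjunction (− ×_B E) ⊣ (p_* E*, leg) evaluated at X; wk_X : X × B → P_p X defined as P_p(π₁) ∘ η_{X×B} (using the unit η of this adjunction and the isomorphism (X × B) ×_B E ≅ X × E); and proj := η_B : B → P_p E (using B ×_B E ≅ E). Then (P_p, leg, wk, proj, ε) is a polynomial functor for p, i.e. it satisfies axioms (P1)–(P4). -/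
open CategoryTheory CategoryTheory.Limits

universe v u

variable {C : Type u} [Category.{v} C]

/-- A *polynomial functor for `p`*: a pullback-preserving endofunctor `P : C ⥤ C` equipped
with a natural transformation `leg_X : P X ⟶ B`, a natural transformation
`wk_X : X × B ⟶ P X` over `B`, an arrow `proj : B ⟶ P E` over `B`, and a natural
transformation `subst_X : P X ×_B E ⟶ X`, satisfying axioms (P1)–(P4).  Morphisms between
pullbacks (such as `proj ×_B E`, `wk_X ×_B E`, the functorial action of `P(−) ×_B E` on a
morphism, and the pairing used in (P4)) are characterized by their compositions with the two
pullback projections. -/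
structure IsPolynomialFor [HasFiniteLimits C] {E B : C} (p : E ⟶ B)
    (P : C ⥤ C) (leg : ∀ X : C, P.obj X ⟶ B) (wk : ∀ X : C, X ⨯ B ⟶ P.obj X)
    (proj : B ⟶ P.obj E) (subst : ∀ X : C, pullback (leg X) p ⟶ X) : Prop where
  /-- `P` preserves pullbacks. -/
  preserves : PreservesLimitsOfShape WalkingCospan P
  /-- `leg` is a natural transformation `P ⟹ B`. -/
  leg_natural : ∀ (X Y : C) (f : X ⟶ Y), P.map f ≫ leg Y = leg X
  /-- `wk` is a natural transformation `(− × B) ⟹ P`. -/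
  wk_natural : ∀ (X Y : C) (f : X ⟶ Y), prod.map f (𝟙 B) ≫ wk Y = wk X ≫ P.map f
  /-- `wk_X : X × B ⟶ P X` is a morphism over `B`. -/
  wk_over : ∀ X : C, wk X ≫ leg X = (prod.snd : X ⨯ B ⟶ B)
  /-- `proj : B ⟶ P E` is a morphism over `B`. -/
  proj_over : proj ≫ leg E = 𝟙 B
  /-- `subst` is a natural transformation `(P(−) ×_B E) ⟹ 𝟭 C`: for `f : X ⟶ Y`, composing
  the induced morphism `P X ×_B E ⟶ P Y ×_B E` (characterized by the two displayed equations)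
  with `subst Y` equals `subst X ≫ f`. -/
  subst_natural : ∀ (X Y : C) (f : X ⟶ Y) (u : pullback (leg X) p ⟶ pullback (leg Y) p),
    u ≫ pullback.fst (leg Y) p = pullback.fst (leg X) p ≫ P.map f →
    u ≫ pullback.snd (leg Y) p = pullback.snd (leg X) p →
    u ≫ subst Y = subst X ≫ f
  /-- (P1): `P p ∘ proj = wk_B ∘ Δ_B`. -/
  P1 : proj ≫ P.map p = prod.lift (𝟙 B) (𝟙 B) ≫ wk B
  /-- (P2): `subst_E ∘ (proj ×_B E)` is the canonical isomorphism `B ×_B E ≅ E` (the second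
  pullback projection), where `proj ×_B E : B ×_B E ⟶ P E ×_B E` is characterized by the two
  displayed equations. -/
  P2 : ∀ u : pullback (𝟙 B) p ⟶ pullback (leg E) p,
    u ≫ pullback.fst (leg E) p = pullback.fst (𝟙 B) p ≫ proj →
    u ≫ pullback.snd (leg E) p = pullback.snd (𝟙 B) p →
    u ≫ subst E = pullback.snd (𝟙 B) p
  /-- (P3): `subst_X ∘ (wk_X ×_B E)` is the projection `(X × B) ×_B E ≅ X × E ⟶ X`, where
  `wk_X ×_B E : (X × B) ×_B E ⟶ P X ×_B E` is characterized by the displayed equations. -/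
  P3 : ∀ (X : C) (u : pullback (prod.snd : X ⨯ B ⟶ B) p ⟶ pullback (leg X) p),
    u ≫ pullback.fst (leg X) p = pullback.fst (prod.snd : X ⨯ B ⟶ B) p ≫ wk X →
    u ≫ pullback.snd (leg X) p = pullback.snd (prod.snd : X ⨯ B ⟶ B) p →
    u ≫ subst X = pullback.fst (prod.snd : X ⨯ B ⟶ B) p ≫ (prod.fst : X ⨯ B ⟶ X)
  /-- (P4): `P(subst_X) ∘ (wk_{PX} ∘ (id_{PX}, leg_X), proj ∘ leg_X) = id_{PX}`, where the
  pairing `P X ⟶ P (P X ×_B E)` is characterized, via the isomorphism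
  `P (P X ×_B E) ≅ P P X ×_{P B} P E` coming from `P` preserving pullbacks, by its composites
  with `P` applied to the two pullback projections. -/
  P4 : ∀ (X : C) (u : P.obj X ⟶ P.obj (pullback (leg X) p)),
    u ≫ P.map (pullback.fst (leg X) p) = prod.lift (𝟙 (P.obj X)) (leg X) ≫ wk (P.obj X) →
    u ≫ P.map (pullback.snd (leg X) p) = leg X ≫ proj →
    u ≫ P.map (subst X) = 𝟙 (P.obj X)

section Assoc

variable [HasFiniteLimits C] {E B : C} (p : E ⟶ B)
  (pstar : Over E ⥤ Over B) (adj : Over.pullback p ⊣ pstar)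

/-- The associated polynomial functor `P_p = B_! ∘ p_* ∘ E* : C ⥤ C`. -/
noncomputable def assocPoly : C ⥤ C := Over.star E ⋙ pstar ⋙ Over.forget B

/-- The structure arrow `leg_X : P_p X ⟶ B` of `p_* E* X ∈ C/B`. -/
noncomputable def assocLeg (X : C) : (assocPoly pstar).obj X ⟶ B :=
  ((Over.star E ⋙ pstar).obj X).hom

/-- The adjunction `(− ×_B E) ⊣ (p_* E*, leg)`, obtained by composing `p* ⊣ p_*` with
`E_! ⊣ E*`. -/
noncomputable def assocAdj :
    (Over.pullback p ⋙ Over.forget E) ⊣ (Over.star E ⋙ pstar) :=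
  adj.comp (Over.forgetAdjStar E)

/-- The counit `ε_X : P_p X ×_B E ⟶ X` of the adjunction `(− ×_B E) ⊣ (p_* E*, leg)`. -/
noncomputable def assocSubst (X : C) : pullback (assocLeg pstar X) p ⟶ X :=
  (assocAdj p pstar adj).counit.app X

/-- The underlying arrow `Y.left ⟶ P_p (Y ×_B E)` of the unit
`η_Y : Y ⟶ (p_* E*) (Y ×_B E)` of the adjunction `(− ×_B E) ⊣ (p_* E*, leg)`. -/
noncomputable def assocUnit (Y : Over B) :
    Y.left ⟶ (assocPoly pstar).obj (pullback Y.hom p) :=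
  ((assocAdj p pstar adj).unit.app Y).left

/-- `wk_X : X × B ⟶ P_p X`, defined as `P_p(π₁) ∘ η_{X×B}`, using the isomorphism
`(X × B) ×_B E ≅ X × E` (under which `P_p π₁` corresponds to `P_p` applied to the composite
`(X × B) ×_B E ⟶ X × B ⟶ X` of the first pullback projection and the first product
projection). -/
noncomputable def assocWk (X : C) : X ⨯ B ⟶ (assocPoly pstar).obj X :=
  assocUnit p pstar adj (Over.mk (prod.snd : X ⨯ B ⟶ B)) ≫
    (assocPoly pstar).map
      (pullback.fst (Over.mk (prod.snd : X ⨯ B ⟶ B)).hom p ≫ prod.fst)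

/-- `proj : B ⟶ P_p E`, defined as `η_B : B ⟶ P_p (B ×_B E)` followed by `P_p` applied to
the isomorphism `B ×_B E ≅ E` (the second pullback projection). -/
noncomputable def assocProj : B ⟶ (assocPoly pstar).obj E :=
  assocUnit p pstar adj (Over.mk (𝟙 B)) ≫
    (assocPoly pstar).map (pullback.snd (Over.mk (𝟙 B)).hom p)

end Assoc

section Helpers

variable [HasFiniteLimits C] {E B : C} (p : E ⟶ B)
  (pstar : Over E ⥤ Over B) (adj : Over.pullback p ⊣ pstar)

lemma aux_preserves (p : E ⟶ B) (adj : Over.pullback p ⊣ pstar) : PreservesLimitsOfShape WalkingCospan (assocPoly pstar) := by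
  have h1 : PreservesLimitsOfShape WalkingCospan (Over.star E : C ⥤ Over E) :=
    (Over.forgetAdjStar E).rightAdjoint_preservesLimits.preservesLimitsOfShape
  have h2 : PreservesLimitsOfShape WalkingCospan pstar :=
    adj.rightAdjoint_preservesLimits.preservesLimitsOfShape
  unfold assocPoly
  infer_instance

lemma aux_leg {X Y : C} (f : X ⟶ Y) :
    (assocPoly pstar).map f ≫ assocLeg pstar Y = assocLeg pstar X :=
  Over.w ((Over.star E ⋙ pstar).map f)

lemma aux_unit_leg (Y : Over B) :
    assocUnit p pstar adj Y ≫ assocLeg pstar _ = Y.hom :=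
  Over.w ((assocAdj p pstar adj).unit.app Y)

lemma aux_map {Y Y' : Over B} (g : Y ⟶ Y')
    (v : pullback Y.hom p ⟶ pullback Y'.hom p)
    (h1 : v ≫ pullback.fst Y'.hom p = pullback.fst Y.hom p ≫ g.left)
    (h2 : v ≫ pullback.snd Y'.hom p = pullback.snd Y.hom p) :
    v = ((Over.pullback p ⋙ Over.forget E).map g) := by
  apply pullback.hom_ext
  · exact h1.trans (pullback.lift_fst _ _ _).symm
  · exact h2.trans (pullback.lift_snd _ _ _).symm

lemma aux_unit_nat {Y Y' : Over B} (g : Y ⟶ Y')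
    (v : pullback Y.hom p ⟶ pullback Y'.hom p)
    (h1 : v ≫ pullback.fst Y'.hom p = pullback.fst Y.hom p ≫ g.left)
    (h2 : v ≫ pullback.snd Y'.hom p = pullback.snd Y.hom p) :
    g.left ≫ assocUnit p pstar adj Y' =
      assocUnit p pstar adj Y ≫ (assocPoly pstar).map v := by
  have hv : v = ((Over.pullback p ⋙ Over.forget E).map g) := aux_map p g v h1 h2
  have := congrArg CommaMorphism.left ((assocAdj p pstar adj).unit.naturality g)
  subst hv
  exact this

lemma aux_unit_nat' {A A' : C} (y : A ⟶ B) (y' : A' ⟶ B) (g : A ⟶ A') (hg : g ≫ y' = y)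
    {Z : C} (k : pullback y' p ⟶ Z) (l : pullback y p ⟶ Z)
    (h : ∀ v : pullback y p ⟶ pullback y' p,
      v ≫ pullback.fst y' p = pullback.fst y p ≫ g →
      v ≫ pullback.snd y' p = pullback.snd y p → v ≫ k = l) :
    g ≫ assocUnit p pstar adj (Over.mk y') ≫ (assocPoly pstar).map k =
      assocUnit p pstar adj (Over.mk y) ≫ (assocPoly pstar).map l := by
  have hw : (pullback.fst y p ≫ g) ≫ y' = pullback.snd y p ≫ p := by
    rw [Category.assoc, ← pullback.condition, hg]
  have h0 := aux_unit_nat p pstar adj (Over.homMk g hg : Over.mk y ⟶ Over.mk y')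
    (pullback.lift _ _ hw) (pullback.lift_fst _ _ _) (pullback.lift_snd _ _ _)
  have h3 := h (pullback.lift _ _ hw) (pullback.lift_fst _ _ _) (pullback.lift_snd _ _ _)
  have h4 := congrArg (· ≫ (assocPoly pstar).map k) h0
  refine (Category.assoc _ _ _).symm.trans (h4.trans ((Category.assoc _ _ _).trans ?_))
  rw [← h3, Functor.map_comp]
  rfl

lemma aux_subst {Y : Over B} {X : C} (f : pullback Y.hom p ⟶ X)
    (u : pullback Y.hom p ⟶ pullback (assocLeg pstar X) p)
    (h1 : u ≫ pullback.fst _ p = pullback.fst Y.hom p ≫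
      assocUnit p pstar adj Y ≫ (assocPoly pstar).map f)
    (h2 : u ≫ pullback.snd _ p = pullback.snd Y.hom p) :
    u ≫ assocSubst p pstar adj X = f := by
  have hu : u = (Over.pullback p ⋙ Over.forget E).map
      ((assocAdj p pstar adj).homEquiv Y X f) := by
    refine aux_map p (Y' := (Over.star E ⋙ pstar).obj X) _ u (h1.trans ?_) h2
    have e := (assocAdj p pstar adj).homEquiv_unit (X := Y) (Y := X) (f := f)
    exact (congrArg (fun t => pullback.fst Y.hom p ≫ t) (congrArg CommaMorphism.left e)).symm
  subst hu
  have := ((assocAdj p pstar adj).homEquiv Y X).symm_apply_apply f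
  rw [Adjunction.homEquiv_counit] at this
  exact this

lemma aux_subst_nat {X Y : C} (f : X ⟶ Y)
    (u : pullback (assocLeg pstar X) p ⟶ pullback (assocLeg pstar Y) p)
    (h1 : u ≫ pullback.fst _ p = pullback.fst _ p ≫ (assocPoly pstar).map f)
    (h2 : u ≫ pullback.snd _ p = pullback.snd _ p) :
    u ≫ assocSubst p pstar adj Y = assocSubst p pstar adj X ≫ f := by
  have hu : u = (Over.pullback p ⋙ Over.forget E).map ((Over.star E ⋙ pstar).map f) := 
    aux_map p (Y := (Over.star E ⋙ pstar).obj X) (Y' := (Over.star E ⋙ pstar).obj Y) _ u h1 h2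
  subst hu
  exact (assocAdj p pstar adj).counit.naturality f

lemma aux_triangle (X : C) :
    assocUnit p pstar adj (Over.mk (assocLeg pstar X)) ≫
      (assocPoly pstar).map (assocSubst p pstar adj X) = 𝟙 _ :=
  congrArg CommaMorphism.left ((assocAdj p pstar adj).right_triangle_components X)

end Helpers

/-- Let `p : E ⟶ B` be an exponentiable arrow in a cartesian category `C`
(witnessed by `p* ⊣ p_*`), and let `P_p = B_! ∘ p_* ∘ E*` be the associated polynomial
functor, with `leg` the structure arrow of `p_* E* X`, `ε` the counit of the adjunction
`(− ×_B E) ⊣ (p_* E*, leg)`, and `wk`, `proj` constructed from the unit `η` of this adjunction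
as above.  Then `(P_p, leg, wk, proj, ε)` is a polynomial functor for `p`, i.e. it satisfies
axioms (P1)–(P4). -/
theorem assocPoly_isPolynomialFor {C : Type u} [Category.{v} C] [HasFiniteLimits C]
    {E B : C} (p : E ⟶ B) (pstar : Over E ⥤ Over B) (adj : Over.pullback p ⊣ pstar) :
    IsPolynomialFor p (assocPoly pstar) (assocLeg pstar) (assocWk p pstar adj)
      (assocProj p pstar adj) (assocSubst p pstar adj) := by
  have hpres := aux_preserves pstar p adj
  refine ⟨hpres, fun X Y f => aux_leg pstar f, ?_, ?_, ?_, ?_, ?_, ?_, ?_, ?_⟩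
  · intro X Y f
    rw [assocWk, assocWk, Category.assoc, ← Functor.map_comp]
    refine aux_unit_nat' p pstar adj prod.snd prod.snd (prod.map f (𝟙 B))
      (by rw [prod.map_snd, Category.comp_id]) _ _ ?_
    intro v e1 e2
    erw [reassoc_of% e1, prod.map_fst, Category.assoc]
    rfl
  · intro X
    rw [assocWk, Category.assoc, aux_leg, aux_unit_leg]
    rfl
  · rw [assocProj, Category.assoc, aux_leg, aux_unit_leg]
    rfl
  · intro X Y f u h1 h2
    exact aux_subst_nat p pstar adj f u h1 h2
  · rw [assocProj, assocWk, Category.assoc, ← Functor.map_comp]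
    symm
    refine aux_unit_nat' p pstar adj (𝟙 B) prod.snd (prod.lift (𝟙 B) (𝟙 B))
      (prod.lift_snd _ _) _ _ ?_
    intro v e1 e2
    erw [reassoc_of% e1, prod.lift_fst]
    exact pullback.condition
  · intro u h1 h2
    exact aux_subst p pstar adj (Y := Over.mk (𝟙 B)) _ u h1 h2
  · intro X u h1 h2
    exact aux_subst p pstar adj (Y := Over.mk (prod.snd : X ⨯ B ⟶ B)) _ u h1 h2
  · intro X u h1 h2
    have key : u = assocUnit p pstar adj (Over.mk (assocLeg pstar X)) := by
      have hp := (IsPullback.of_hasPullback (assocLeg pstar X) p).map (assocPoly pstar)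
      apply hp.hom_ext
      · rw [h1, assocWk]
        refine aux_unit_nat' p pstar adj (assocLeg pstar X) prod.snd
          (prod.lift (𝟙 _) (assocLeg pstar X)) (prod.lift_snd _ _) _ _ ?_
        intro v e1 e2
        erw [reassoc_of% e1, prod.lift_fst, Category.comp_id]
      · rw [h2, assocProj]
        refine aux_unit_nat' p pstar adj (assocLeg pstar X) (𝟙 B) (assocLeg pstar X)
          (Category.comp_id _) _ _ ?_
        intro v e1 e2
        exact e2
    rw [key]
    exact aux_triangle p pstar adj X
end

section
/- Let C be a cartesian category, p : E → B an arrow in C, P : C → C a pullback-preserving endofunctor, leg_X : PX → B a natural transformation, and subst_X : PX ×_B E → X a natural transformation. Then there is a bijection between: (i) the set of natural transformations η_Y : Y → P(Y ×_B E) (for Y ∈ C/B) making the functor (P, leg) : C → C/B a right adjoint of (− ×_B E) : C/B → C with unit η and counit subst; and (ii) the set of pairs (wk, proj), with wk_X : X × B → PX a natural transformation over B and proj : B → PE an arrow over B, making (P, leg, wk, proj, subst) a polynomial functor for p. The bijection sends η to the pair given by wk_X = P(π₁) ∘ η_{X×B} (via (X × B) ×_B E ≅ X × E) and proj = η_B (via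 B ×_B E ≅ E). -/
open CategoryTheory CategoryTheory.Limits

universe v u

variable {C : Type u} [Category.{v} C]

/-- The functor `(P, leg) : C ⥤ C/B` determined by an endofunctor `P : C ⥤ C` and a natural
transformation `leg_X : P X ⟶ B`. -/
@[simps]
def legFunctor {B : C} (P : C ⥤ C) (leg : ∀ X : C, P.obj X ⟶ B)
    (hleg : ∀ (X Y : C) (f : X ⟶ Y), P.map f ≫ leg Y = leg X) : C ⥤ Over B where
  obj X := Over.mk (leg X)
  map {X Y} f := Over.homMk (P.map f) (hleg X Y f)

/-- The property that a family `η_Y : Y ⟶ P (Y ×_B E)` (for `Y ∈ C/B`) is a natural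
transformation making `(P, leg) : C ⥤ C/B` a right adjoint of `(− ×_B E) : C/B ⥤ C` with
unit `η` and counit `subst`: each `η_Y` is a morphism over `B`, `η` is natural in `Y`, and
the two triangle identities hold.  In the second triangle identity, the morphism
`η_Y ×_B E : Y ×_B E ⟶ P (Y ×_B E) ×_B E` is characterized by its compositions with the two
pullback projections. -/
structure IsAdjointUnit [HasFiniteLimits C] {E B : C} (p : E ⟶ B)
    (P : C ⥤ C) (leg : ∀ X : C, P.obj X ⟶ B) (subst : ∀ X : C, pullback (leg X) p ⟶ X)
    (η : ∀ Y : Over B, Y.left ⟶ P.obj (pullback Y.hom p)) : Prop where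
  /-- Each `η_Y` is a morphism `Y ⟶ (P (Y ×_B E), leg)` in `C/B`. -/
  η_over : ∀ Y : Over B, η Y ≫ leg (pullback Y.hom p) = Y.hom
  /-- `η` is natural in `Y ∈ C/B`. -/
  natural : ∀ (Y Z : Over B) (f : Y ⟶ Z),
    f.left ≫ η Z = η Y ≫ P.map ((Over.pullback p ⋙ Over.forget E).map f)
  /-- First triangle identity: `P (subst_X) ∘ η_{(P X, leg_X)} = id_{P X}`. -/
  triangle₁ : ∀ X : C, η (Over.mk (leg X)) ≫ P.map (subst X) = 𝟙 (P.obj X)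
  /-- Second triangle identity: `subst_{Y ×_B E} ∘ (η_Y ×_B E) = id_{Y ×_B E}`. -/
  triangle₂ : ∀ (Y : Over B)
    (u : pullback Y.hom p ⟶ pullback (leg (pullback Y.hom p)) p),
    u ≫ pullback.fst (leg (pullback Y.hom p)) p = pullback.fst Y.hom p ≫ η Y →
    u ≫ pullback.snd (leg (pullback Y.hom p)) p = pullback.snd Y.hom p →
    u ≫ subst (pullback Y.hom p) = 𝟙 (pullback Y.hom p)

section Helpers

attribute [local simp] pullback.lift_fst pullback.lift_snd pullback.lift_fst_assoc
  pullback.lift_snd_assoc prod.lift_fst prod.lift_snd prod.map_fst prod.map_snd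
  prod.lift_fst_assoc prod.lift_snd_assoc prod.map_fst_assoc prod.map_snd_assoc

/-- The action of `(− ×_B E)` on a morphism, with its type written through `pullback`. -/
noncomputable def polyMap [HasFiniteLimits C] {E B : C} (p : E ⟶ B) {Y Z : Over B} (f : Y ⟶ Z) :
    pullback Y.hom p ⟶ pullback Z.hom p :=
  (Over.pullback p ⋙ Over.forget E).map f

theorem poly_pullback_map_fst [HasFiniteLimits C] {E B : C} (p : E ⟶ B) {Y Z : Over B} (f : Y ⟶ Z) :
    polyMap p f ≫ pullback.fst Z.hom p = pullback.fst Y.hom p ≫ f.left :=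
  pullback.lift_fst _ _ _

theorem poly_pullback_map_snd [HasFiniteLimits C] {E B : C} (p : E ⟶ B) {Y Z : Over B} (f : Y ⟶ Z) :
    polyMap p f ≫ pullback.snd Z.hom p = pullback.snd Y.hom p :=
  pullback.lift_snd _ _ _

variable [HasFiniteLimits C] {E B : C} {p : E ⟶ B} {P : C ⥤ C}
  {leg : ∀ X : C, P.obj X ⟶ B} {subst : ∀ X : C, pullback (leg X) p ⟶ X}

theorem poly_isPullback (hP : PreservesLimitsOfShape WalkingCospan P) {Y : C} (y : Y ⟶ B) :
    IsPullback (P.map (pullback.fst y p)) (P.map (pullback.snd y p)) (P.map y) (P.map p) :=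
  (IsPullback.of_hasPullback y p).map P

theorem poly_natural {η : ∀ Y : Over B, Y.left ⟶ P.obj (pullback Y.hom p)}
    (h : IsAdjointUnit p P leg subst η) {Y Z : Over B} (f : Y ⟶ Z) :
    f.left ≫ η Z = η Y ≫ P.map (polyMap p f) :=
  h.natural Y Z f

theorem poly_eta_fst {η : ∀ Y : Over B, Y.left ⟶ P.obj (pullback Y.hom p)}
    (h : IsAdjointUnit p P leg subst η) (Y : Over B) :
    prod.lift (𝟙 Y.left) Y.hom ≫ η (Over.mk (prod.snd : Y.left ⨯ B ⟶ B)) ≫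
      P.map (pullback.fst (Over.mk (prod.snd : Y.left ⨯ B ⟶ B)).hom p ≫ prod.fst)
      = η Y ≫ P.map (pullback.fst Y.hom p) := by
  let f : Y ⟶ Over.mk (prod.snd : Y.left ⨯ B ⟶ B) :=
    Over.homMk (prod.lift (𝟙 Y.left) Y.hom) (by simp)
  have hn := poly_natural h f
  have h1 := poly_pullback_map_fst p f
  have hf : f.left = prod.lift (𝟙 Y.left) Y.hom := rfl
  rw [← hf, reassoc_of% hn, ← P.map_comp, reassoc_of% h1, hf]
  congr 2
  erw [prod.lift_fst, Category.comp_id]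

theorem poly_eta_snd {η : ∀ Y : Over B, Y.left ⟶ P.obj (pullback Y.hom p)}
    (h : IsAdjointUnit p P leg subst η) (Y : Over B) :
    Y.hom ≫ η (Over.mk (𝟙 B)) ≫ P.map (pullback.snd (Over.mk (𝟙 B)).hom p)
      = η Y ≫ P.map (pullback.snd Y.hom p) := by
  let f : Y ⟶ Over.mk (𝟙 B) := Over.homMk Y.hom (by simp)
  have hn := poly_natural h f
  have h1 := poly_pullback_map_snd p f
  have hf : f.left = Y.hom := rfl
  refine (reassoc_of% hn) _ |>.trans ?_
  rw [← P.map_comp, h1]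

/-- `η` followed by `P g` transposes back to `g`. -/
theorem poly_transpose {η : ∀ Y : Over B, Y.left ⟶ P.obj (pullback Y.hom p)}
    (hleg : ∀ (X Y : C) (f : X ⟶ Y), P.map f ≫ leg Y = leg X)
    (hsubst : ∀ (X Y : C) (f : X ⟶ Y) (u : pullback (leg X) p ⟶ pullback (leg Y) p),
      u ≫ pullback.fst (leg Y) p = pullback.fst (leg X) p ≫ P.map f →
      u ≫ pullback.snd (leg Y) p = pullback.snd (leg X) p →
      u ≫ subst Y = subst X ≫ f)
    (h : IsAdjointUnit p P leg subst η) (Y : Over B) {X : C} (g : pullback Y.hom p ⟶ X)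
    (u : pullback Y.hom p ⟶ pullback (leg X) p)
    (h1 : u ≫ pullback.fst (leg X) p = pullback.fst Y.hom p ≫ η Y ≫ P.map g)
    (h2 : u ≫ pullback.snd (leg X) p = pullback.snd Y.hom p) :
    u ≫ subst X = g := by
  let a : pullback Y.hom p ⟶ pullback (leg (pullback Y.hom p)) p :=
    pullback.lift (pullback.fst Y.hom p ≫ η Y) (pullback.snd Y.hom p)
      (by rw [Category.assoc, h.η_over, pullback.condition])
  let b : pullback (leg (pullback Y.hom p)) p ⟶ pullback (leg X) p :=
    pullback.lift (pullback.fst _ p ≫ P.map g) (pullback.snd _ p)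
      (by rw [Category.assoc, hleg, pullback.condition])
  have ha := h.triangle₂ Y a (by simp [a]) (by simp [a])
  have hb := hsubst _ _ g b (by simp [b]) (by simp [b])
  have hu : u = a ≫ b := by
    apply pullback.hom_ext
    · simp [a, b, h1]
    · simp [a, b, h2]
  rw [hu, Category.assoc, hb, reassoc_of% ha]

theorem poly_forward {η : ∀ Y : Over B, Y.left ⟶ P.obj (pullback Y.hom p)}
    (hP : PreservesLimitsOfShape WalkingCospan P)
    (hleg : ∀ (X Y : C) (f : X ⟶ Y), P.map f ≫ leg Y = leg X)
    (hsubst : ∀ (X Y : C) (f : X ⟶ Y) (u : pullback (leg X) p ⟶ pullback (leg Y) p),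
      u ≫ pullback.fst (leg Y) p = pullback.fst (leg X) p ≫ P.map f →
      u ≫ pullback.snd (leg Y) p = pullback.snd (leg X) p →
      u ≫ subst Y = subst X ≫ f)
    (h : IsAdjointUnit p P leg subst η) :
    IsPolynomialFor p P leg
      (fun X : C => η (Over.mk (prod.snd : X ⨯ B ⟶ B)) ≫
            P.map (pullback.fst (Over.mk (prod.snd : X ⨯ B ⟶ B)).hom p ≫ prod.fst))
      (η (Over.mk (𝟙 B)) ≫ P.map (pullback.snd (Over.mk (𝟙 B)).hom p)) subst where
  preserves := hP
  leg_natural := hleg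
  subst_natural := hsubst
  wk_natural X Y f := by
    let g : Over.mk (prod.snd : X ⨯ B ⟶ B) ⟶ Over.mk (prod.snd : Y ⨯ B ⟶ B) :=
      Over.homMk (prod.map f (𝟙 B)) (by simp)
    have hn := poly_natural h g
    have h1 := poly_pullback_map_fst p g
    have hf : g.left = prod.map f (𝟙 B) := rfl
    rw [← hf, reassoc_of% hn, ← P.map_comp, reassoc_of% h1, hf, Category.assoc, ← P.map_comp,
      Category.assoc]
    congr 3
    exact prod.map_fst _ _
  wk_over X := by
    rw [Category.assoc, hleg, h.η_over]; rfl
  proj_over := by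
    rw [Category.assoc, hleg, h.η_over]; rfl
  P1 := by
    have h1 := poly_eta_fst h (Over.mk (𝟙 B))
    refine Eq.trans ?_ h1.symm
    rw [Category.assoc, ← P.map_comp, ← pullback.condition]
    simp
  P2 u h1 h2 := poly_transpose hleg hsubst h (Over.mk (𝟙 B)) _ u h1 h2
  P3 X u h1 h2 := poly_transpose hleg hsubst h (Over.mk (prod.snd : X ⨯ B ⟶ B)) _ u h1 h2
  P4 X u h1 h2 := by
    have h3 := poly_eta_fst h (Over.mk (leg X))
    have h4 := poly_eta_snd h (Over.mk (leg X))
    have hu : u = η (Over.mk (leg X)) := by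
      apply (poly_isPullback hP (leg X)).hom_ext
      · exact h1.trans h3
      · exact h2.trans h4
    rw [hu]
    exact h.triangle₁ X

theorem poly_compat {wk : ∀ X : C, X ⨯ B ⟶ P.obj X} {proj : B ⟶ P.obj E}
    (h : IsPolynomialFor p P leg wk proj subst) (Y : Over B) :
    (prod.lift (𝟙 Y.left) Y.hom ≫ wk Y.left) ≫ P.map Y.hom = (Y.hom ≫ proj) ≫ P.map p := by
  rw [Category.assoc, Category.assoc, h.P1, ← h.wk_natural, ← Category.assoc, ← Category.assoc]
  congr 1
  ext <;> simp

/-- The unit built from `wk` and `proj`. -/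
noncomputable def polyUnit (hP : PreservesLimitsOfShape WalkingCospan P)
    {wk : ∀ X : C, X ⨯ B ⟶ P.obj X} {proj : B ⟶ P.obj E}
    (h : IsPolynomialFor p P leg wk proj subst) (Y : Over B) :
    Y.left ⟶ P.obj (pullback Y.hom p) :=
  (poly_isPullback hP Y.hom).lift (prod.lift (𝟙 Y.left) Y.hom ≫ wk Y.left) (Y.hom ≫ proj)
    (poly_compat h Y)

theorem polyUnit_fst (hP : PreservesLimitsOfShape WalkingCospan P)
    {wk : ∀ X : C, X ⨯ B ⟶ P.obj X} {proj : B ⟶ P.obj E}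
    (h : IsPolynomialFor p P leg wk proj subst) (Y : Over B) :
    polyUnit hP h Y ≫ P.map (pullback.fst Y.hom p) = prod.lift (𝟙 Y.left) Y.hom ≫ wk Y.left :=
  (poly_isPullback hP Y.hom).lift_fst _ _ _

theorem polyUnit_snd (hP : PreservesLimitsOfShape WalkingCospan P)
    {wk : ∀ X : C, X ⨯ B ⟶ P.obj X} {proj : B ⟶ P.obj E}
    (h : IsPolynomialFor p P leg wk proj subst) (Y : Over B) :
    polyUnit hP h Y ≫ P.map (pullback.snd Y.hom p) = Y.hom ≫ proj :=
  (poly_isPullback hP Y.hom).lift_snd _ _ _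

theorem poly_backward (hP : PreservesLimitsOfShape WalkingCospan P)
    {wk : ∀ X : C, X ⨯ B ⟶ P.obj X} {proj : B ⟶ P.obj E}
    (h : IsPolynomialFor p P leg wk proj subst) :
    IsAdjointUnit p P leg subst (polyUnit hP h) where
  η_over Y := by
    rw [← h.leg_natural _ _ (pullback.fst Y.hom p), ← Category.assoc, polyUnit_fst,
      Category.assoc, h.wk_over, prod.lift_snd]
  natural Y Z f := by
    change f.left ≫ polyUnit hP h Z = polyUnit hP h Y ≫ P.map (polyMap p f)
    apply (poly_isPullback hP Z.hom).hom_ext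
    · rw [Category.assoc, Category.assoc, polyUnit_fst, ← P.map_comp, poly_pullback_map_fst,
        P.map_comp, ← Category.assoc (polyUnit hP h Y), polyUnit_fst, Category.assoc,
        ← h.wk_natural, ← Category.assoc, ← Category.assoc]
      congr 1
      ext <;> simp
    · rw [Category.assoc, Category.assoc, polyUnit_snd, ← P.map_comp, poly_pullback_map_snd,
        polyUnit_snd, ← Category.assoc, Over.w]
  triangle₁ X := h.P4 X _ (polyUnit_fst hP h (Over.mk (leg X))) (polyUnit_snd hP h (Over.mk (leg X)))
  triangle₂ Y u h1 h2 := by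
    apply pullback.hom_ext
    · let b : pullback (leg (pullback Y.hom p)) p ⟶ pullback (leg Y.left) p :=
        pullback.lift (pullback.fst _ p ≫ P.map (pullback.fst Y.hom p)) (pullback.snd _ p)
          (by rw [Category.assoc, h.leg_natural, pullback.condition])
      have hb := h.subst_natural _ _ (pullback.fst Y.hom p) b (by simp [b]) (by simp [b])
      let w : pullback Y.hom p ⟶ pullback (prod.snd : Y.left ⨯ B ⟶ B) p :=
        pullback.lift (pullback.fst Y.hom p ≫ prod.lift (𝟙 _) Y.hom) (pullback.snd _ p)
          (by rw [Category.assoc, prod.lift_snd, pullback.condition])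
      let c : pullback (prod.snd : Y.left ⨯ B ⟶ B) p ⟶ pullback (leg Y.left) p :=
        pullback.lift (pullback.fst _ p ≫ wk Y.left) (pullback.snd _ p)
          (by rw [Category.assoc, h.wk_over, pullback.condition])
      have hc := h.P3 Y.left c (by simp [c]) (by simp [c])
      have hu : u ≫ b = w ≫ c := by
        apply pullback.hom_ext
        · simp only [b, w, c, Category.assoc, pullback.lift_fst, pullback.lift_fst_assoc,
            reassoc_of% h1, polyUnit_fst]
        · simp [b, w, c, h2]
      rw [Category.assoc, ← hb, reassoc_of% hu, hc]
      simp [w]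
    · let b : pullback (leg (pullback Y.hom p)) p ⟶ pullback (leg E) p :=
        pullback.lift (pullback.fst _ p ≫ P.map (pullback.snd Y.hom p)) (pullback.snd _ p)
          (by rw [Category.assoc, h.leg_natural, pullback.condition])
      have hb := h.subst_natural _ _ (pullback.snd Y.hom p) b (by simp [b]) (by simp [b])
      let w : pullback Y.hom p ⟶ pullback (𝟙 B) p :=
        pullback.lift (pullback.fst Y.hom p ≫ Y.hom) (pullback.snd _ p)
          (by rw [Category.comp_id, pullback.condition])
      let c : pullback (𝟙 B) p ⟶ pullback (leg E) p :=
        pullback.lift (pullback.fst _ p ≫ proj) (pullback.snd _ p)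
          (by rw [Category.assoc, h.proj_over, pullback.condition])
      have hc := h.P2 c (by simp [c]) (by simp [c])
      have hu : u ≫ b = w ≫ c := by
        apply pullback.hom_ext
        · simp only [b, w, c, Category.assoc, pullback.lift_fst, pullback.lift_fst_assoc,
            reassoc_of% h1, polyUnit_snd]
        · simp [b, w, c, h2]
      rw [Category.assoc, ← hb, reassoc_of% hu, hc]
      simp [w]

end Helpers

/-- Let `C` be a cartesian category, `p : E ⟶ B` an arrow in `C`,
`P : C ⥤ C` a pullback-preserving endofunctor, `leg_X : P X ⟶ B` a natural transformation,
and `subst_X : P X ×_B E ⟶ X` a natural transformation.  Then there is a bijection between: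
(i) the set of natural transformations `η_Y : Y ⟶ P (Y ×_B E)` (for `Y ∈ C/B`) making
`(P, leg) : C ⥤ C/B` a right adjoint of `(− ×_B E) : C/B ⥤ C` with unit `η` and counit
`subst`; and (ii) the set of pairs `(wk, proj)` of a natural transformation
`wk_X : X × B ⟶ P X` over `B` and an arrow `proj : B ⟶ P E` over `B` making
`(P, leg, wk, proj, subst)` a polynomial functor for `p`.  The bijection sends `η` to the pair
given by `wk_X = P(π₁) ∘ η_{X×B}` (via `(X × B) ×_B E ≅ X × E`) and `proj = η_B` (via
`B ×_B E ≅ E`). -/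
theorem adjointUnit_equiv_polynomialStructure
    {C : Type u} [Category.{v} C] [HasFiniteLimits C] {E B : C} (p : E ⟶ B)
    (P : C ⥤ C) (hP : PreservesLimitsOfShape WalkingCospan P)
    (leg : ∀ X : C, P.obj X ⟶ B)
    (hleg : ∀ (X Y : C) (f : X ⟶ Y), P.map f ≫ leg Y = leg X)
    (subst : ∀ X : C, pullback (leg X) p ⟶ X)
    (hsubst : ∀ (X Y : C) (f : X ⟶ Y) (u : pullback (leg X) p ⟶ pullback (leg Y) p),
      u ≫ pullback.fst (leg Y) p = pullback.fst (leg X) p ≫ P.map f →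
      u ≫ pullback.snd (leg Y) p = pullback.snd (leg X) p →
      u ≫ subst Y = subst X ≫ f) :
    ∃ e : {η : ∀ Y : Over B, Y.left ⟶ P.obj (pullback Y.hom p) //
            IsAdjointUnit p P leg subst η} ≃
          {wp : (∀ X : C, X ⨯ B ⟶ P.obj X) × (B ⟶ P.obj E) //
            IsPolynomialFor p P leg wp.1 wp.2 subst},
      ∀ η, (e η).val =
        ⟨fun X : C => η.val (Over.mk (prod.snd : X ⨯ B ⟶ B)) ≫
            P.map (pullback.fst (Over.mk (prod.snd : X ⨯ B ⟶ B)).hom p ≫ prod.fst),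
          η.val (Over.mk (𝟙 B)) ≫ P.map (pullback.snd (Over.mk (𝟙 B)).hom p)⟩ := by
  refine ⟨
    { toFun := fun η => ⟨_, poly_forward hP hleg hsubst η.2⟩
      invFun := fun wp => ⟨polyUnit hP wp.2, poly_backward hP wp.2⟩
      left_inv := ?_
      right_inv := ?_ }, fun η => rfl⟩
  · rintro ⟨η, h⟩
    apply Subtype.ext
    funext Y
    apply (poly_isPullback hP Y.hom).hom_ext
    · exact (polyUnit_fst hP (poly_forward hP hleg hsubst h) Y).trans (poly_eta_fst h Y)
    · exact (polyUnit_snd hP (poly_forward hP hleg hsubst h) Y).trans (poly_eta_snd h Y)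
  · rintro ⟨⟨wk, proj⟩, h⟩
    apply Subtype.ext
    apply Prod.ext
    · funext X
      have h1 := polyUnit_fst hP h (Over.mk (prod.snd : X ⨯ B ⟶ B))
      have h2 := h.wk_natural _ _ (prod.fst : X ⨯ B ⟶ X)
      change polyUnit hP h (Over.mk (prod.snd : X ⨯ B ⟶ B)) ≫ P.map (_ ≫ prod.fst) = wk X
      rw [P.map_comp, reassoc_of% h1]
      change prod.lift (𝟙 (X ⨯ B)) prod.snd ≫ wk (X ⨯ B) ≫ P.map prod.fst = wk X
      erw [← h2]
      rw [← Category.assoc]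
      convert Category.id_comp (wk X)
      ext <;> simp
    · exact (polyUnit_snd hP h (Over.mk (𝟙 B))).trans (Category.id_comp _)
end

section
/- For an arrow p : E → B in a cartesian category C, the following are equivalent: (1) p is exponentiable; (2) there exists a polynomial functor for p, i.e. a pullback-preserving endofunctor P : C → C together with natural transformations leg, wk, subst and an arrow proj satisfying axioms (P1)–(P4). -/
open CategoryTheory CategoryTheory.Limits

universe v u

variable {C : Type u} [Category.{v} C]

/-- base change of a morphism over `B`. -/
noncomputable def bc [HasFiniteLimits C] {E B : C} (p : E ⟶ B) {Y Z : C} {g : Y ⟶ B} {k : Z ⟶ B}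
    (f : Y ⟶ Z) (w : f ≫ k = g) : pullback g p ⟶ pullback k p :=
  pullback.lift (pullback.fst g p ≫ f) (pullback.snd g p)
    (by rw [Category.assoc, w, pullback.condition])

section
attribute [local simp] prod.lift_fst prod.lift_snd prod.map_fst prod.map_snd pullback.lift_fst
  pullback.lift_snd
variable [HasFiniteLimits C] {E B : C} (p : E ⟶ B)

@[simp]
theorem bc_fst {Y Z : C} {g : Y ⟶ B} {k : Z ⟶ B}
    (f : Y ⟶ Z) (w : f ≫ k = g) : bc p f w ≫ pullback.fst k p = pullback.fst g p ≫ f := by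
  exact pullback.lift_fst _ _ _

@[simp]
theorem bc_fst_assoc {Y Z : C} {g : Y ⟶ B} {k : Z ⟶ B}
    (f : Y ⟶ Z) (w : f ≫ k = g) {W : C} (t : Z ⟶ W) :
    bc p f w ≫ pullback.fst k p ≫ t = pullback.fst g p ≫ f ≫ t := by
  rw [← Category.assoc, bc_fst, Category.assoc]

@[simp]
theorem bc_snd {Y Z : C} {g : Y ⟶ B} {k : Z ⟶ B}
    (f : Y ⟶ Z) (w : f ≫ k = g) : bc p f w ≫ pullback.snd k p = pullback.snd g p := by
  exact pullback.lift_snd _ _ _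

@[simp]
theorem bc_snd_assoc {Y Z : C} {g : Y ⟶ B} {k : Z ⟶ B}
    (f : Y ⟶ Z) (w : f ≫ k = g) {W : C} (t : E ⟶ W) :
    bc p f w ≫ pullback.snd k p ≫ t = pullback.snd g p ≫ t := by
  rw [← Category.assoc, bc_snd]

theorem bc_comp {Y Z W : C} {g : Y ⟶ B} {k : Z ⟶ B} {l : W ⟶ B}
    (f : Y ⟶ Z) (w : f ≫ k = g) (f' : Z ⟶ W) (w' : f' ≫ l = k) :
    bc p f w ≫ bc p f' w' = bc p (f ≫ f') (by rw [Category.assoc, w', w]) := by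
  apply pullback.hom_ext <;> simp

theorem bc_comp_assoc {Y Z W : C} {g : Y ⟶ B} {k : Z ⟶ B} {l : W ⟶ B}
    (f : Y ⟶ Z) (w : f ≫ k = g) (f' : Z ⟶ W) (w' : f' ≫ l = k) {T : C} (t : pullback l p ⟶ T) :
    bc p f w ≫ bc p f' w' ≫ t = bc p (f ≫ f') (by rw [Category.assoc, w', w]) ≫ t := by
  rw [← Category.assoc, bc_comp]

structure IsRep (P : C ⥤ C) (leg : ∀ X : C, P.obj X ⟶ B)
    (subst : ∀ X : C, pullback (leg X) p ⟶ X) : Prop where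
  preserves : PreservesLimitsOfShape WalkingCospan P
  leg_natural : ∀ {X Y : C} (f : X ⟶ Y), P.map f ≫ leg Y = leg X
  subst_natural : ∀ {X Y : C} (f : X ⟶ Y), bc p (P.map f) (leg_natural f) ≫ subst Y = subst X ≫ f
  inj : ∀ {X Y : C} {g : Y ⟶ B} (f f' : Y ⟶ P.obj X) (w : f ≫ leg X = g) (w' : f' ≫ leg X = g),
    bc p f w ≫ subst X = bc p f' w' ≫ subst X → f = f'
  surj : ∀ {X Y : C} (g : Y ⟶ B) (h : pullback g p ⟶ X),
    ∃ (f : Y ⟶ P.obj X) (w : f ≫ leg X = g), bc p f w ≫ subst X = h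

theorem isRep_of_poly {P : C ⥤ C} {leg : ∀ X : C, P.obj X ⟶ B} {wk : ∀ X : C, X ⨯ B ⟶ P.obj X}
    {proj : B ⟶ P.obj E} {subst : ∀ X : C, pullback (leg X) p ⟶ X}
    (H : IsPolynomialFor p P leg wk proj subst) : IsRep p P leg subst := by
  have pres := H.preserves
  have pb : ∀ {Y : C} (g : Y ⟶ B), IsPullback (P.map (pullback.fst g p))
      (P.map (pullback.snd g p)) (P.map g) (P.map p) := fun g =>
    (IsPullback.of_hasPullback g p).map P
  have hη : ∀ {Y : C} (g : Y ⟶ B),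
      (prod.lift (𝟙 Y) g ≫ wk Y) ≫ P.map g = (g ≫ proj) ≫ P.map p := by
    intro Y g
    rw [Category.assoc, Category.assoc, H.P1, ← H.wk_natural, ← Category.assoc, ← Category.assoc]
    congr 1
    ext <;> simp
  let η : ∀ {Y : C} (g : Y ⟶ B), Y ⟶ P.obj (pullback g p) := fun g =>
    (pb g).lift _ _ (hη g)
  have η1 : ∀ {Y : C} (g : Y ⟶ B), η g ≫ P.map (pullback.fst g p) = prod.lift (𝟙 Y) g ≫ wk Y :=
    fun g => (pb g).lift_fst _ _ (hη g)
  have η2 : ∀ {Y : C} (g : Y ⟶ B), η g ≫ P.map (pullback.snd g p) = g ≫ proj :=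
    fun g => (pb g).lift_snd _ _ (hη g)
  have ηleg : ∀ {Y : C} (g : Y ⟶ B), η g ≫ leg _ = g := by
    intro Y g
    rw [← H.leg_natural _ _ (pullback.snd g p), ← Category.assoc, η2, Category.assoc, H.proj_over,
      Category.comp_id]
  have ηnat : ∀ {Y Z : C} {g : Y ⟶ B} {k : Z ⟶ B} (f : Y ⟶ Z) (w : f ≫ k = g),
      η g ≫ P.map (bc p f w) = f ≫ η k := by
    intro Y Z g k f w
    apply (pb k).hom_ext
    · rw [Category.assoc, ← P.map_comp, bc_fst, P.map_comp, ← Category.assoc, η1, Category.assoc,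
        Category.assoc, η1, ← H.wk_natural, ← Category.assoc, ← Category.assoc]
      congr 1
      ext <;> simp [w]
    · rw [Category.assoc, ← P.map_comp, bc_snd, η2, Category.assoc, η2, ← Category.assoc, w]
  have nat : ∀ {X Y : C} (f : X ⟶ Y), bc p (P.map f) (H.leg_natural _ _ f) ≫ subst Y = subst X ≫ f :=
    fun f => H.subst_natural _ _ f _ (bc_fst ..) (bc_snd ..)
  have ηsub : ∀ {Y : C} (g : Y ⟶ B), bc p (η g) (ηleg g) ≫ subst _ = 𝟙 _ := by
    intro Y g
    apply pullback.hom_ext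
    · rw [Category.assoc, ← nat, bc_comp_assoc, Category.id_comp]
      have : bc p (η g ≫ P.map (pullback.fst g p)) (by rw [Category.assoc, H.leg_natural, ηleg]) =
        bc p (prod.lift (𝟙 Y) g) (by simp) ≫ bc p (wk Y) (H.wk_over Y) := by
        apply pullback.hom_ext <;> simp [η1]
      rw [this, Category.assoc, H.P3 _ _ (bc_fst ..) (bc_snd ..)]
      simp
    · rw [Category.assoc, ← nat, bc_comp_assoc, Category.id_comp]
      have : bc p (η g ≫ P.map (pullback.snd g p)) (by rw [Category.assoc, H.leg_natural, ηleg]) =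
        bc p g (by simp) ≫ bc p proj H.proj_over := by
        apply pullback.hom_ext <;> simp [η2]
      rw [this, Category.assoc, H.P2 _ (bc_fst ..) (bc_snd ..)]
      simp
  refine ⟨pres, H.leg_natural _ _, nat, ?_, ?_⟩
  · intro X Y g f f' w w' h
    have key : ∀ (f : Y ⟶ P.obj X) (w : f ≫ leg X = g),
        η g ≫ P.map (bc p f w ≫ subst X) = f := by
      intro f w
      rw [P.map_comp, ← Category.assoc, ηnat, Category.assoc, H.P4 X _ (η1 _) (η2 _),
        Category.comp_id]
    rw [← key f w, ← key f' w', h]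
  · intro X Y g h
    refine ⟨η g ≫ P.map h, by rw [Category.assoc, H.leg_natural, ηleg], ?_⟩
    rw [← bc_comp p (η g) (ηleg g) (P.map h) (H.leg_natural _ _ h), Category.assoc, nat,
      ← Category.assoc, ηsub, Category.id_comp]

theorem poly_of_isRep {P : C ⥤ C} {leg : ∀ X : C, P.obj X ⟶ B}
    {subst : ∀ X : C, pullback (leg X) p ⟶ X} (H : IsRep p P leg subst) :
    ∃ (wk : ∀ X : C, X ⨯ B ⟶ P.obj X) (proj : B ⟶ P.obj E),
        IsPolynomialFor p P leg wk proj subst := by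
  choose wk wkw hwk using fun X : C =>
    H.surj (prod.snd : X ⨯ B ⟶ B) (pullback.fst _ p ≫ (prod.fst : X ⨯ B ⟶ X))
  obtain ⟨proj, projw, hproj⟩ := H.surj (𝟙 B) (pullback.snd (𝟙 B) p)
  have ubc : ∀ {Y Z : C} {g : Y ⟶ B} {k : Z ⟶ B} (f : Y ⟶ Z) (w : f ≫ k = g)
      (u : pullback g p ⟶ pullback k p), u ≫ pullback.fst k p = pullback.fst g p ≫ f →
      u ≫ pullback.snd k p = pullback.snd g p → u = bc p f w := by
    intro Y Z g k f w u h1 h2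
    apply pullback.hom_ext <;> simp [h1, h2]
  have tr : ∀ {Y X X' : C} {g : Y ⟶ B} (f : Y ⟶ P.obj X) (w : f ≫ leg X = g) (h : X ⟶ X')
      (w' : (f ≫ P.map h) ≫ leg X' = g),
      bc p (f ≫ P.map h) w' ≫ subst X' = bc p f w ≫ subst X ≫ h := by
    intro Y X X' g f w h w'
    rw [← bc_comp p f w (P.map h) (H.leg_natural h), Category.assoc, H.subst_natural]
  have tl : ∀ {Y Z X : C} {g : Y ⟶ B} {k : Z ⟶ B} (f : Y ⟶ Z) (w : f ≫ k = g) (t : Z ⟶ P.obj X)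
      (w' : t ≫ leg X = k) (w'' : (f ≫ t) ≫ leg X = g),
      bc p (f ≫ t) w'' ≫ subst X = bc p f w ≫ bc p t w' ≫ subst X := by
    intro Y Z X g k f w t w' w''
    rw [bc_comp_assoc]
  refine ⟨wk, proj, H.preserves, fun _ _ f => H.leg_natural f, ?_, wkw, projw, ?_, ?_, ?_, ?_, ?_⟩
  · intro X Y f
    apply H.inj (g := prod.snd) _ _ (by simp [wkw]) (by simp [wkw, H.leg_natural])
    rw [tr _ (wkw X), tl _ (by simp) _ (wkw Y), hwk, reassoc_of% hwk]
    simp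
  · intro X Y f u h1 h2
    rw [ubc (P.map f) (H.leg_natural f) u h1 h2, H.subst_natural]
  · apply H.inj (g := 𝟙 B) _ _ (by simp [projw, H.leg_natural]) (by simp [wkw])
    rw [tr _ projw, tl _ (by simp) _ (wkw B), hwk, reassoc_of% hproj]
    simp [← pullback.condition]
  · intro u h1 h2
    rw [ubc proj projw u h1 h2, hproj]
  · intro X u h1 h2
    rw [ubc (wk X) (wkw X) u h1 h2, hwk]
  · intro X u h1 h2
    have uw : u ≫ leg _ = leg X := by
      rw [← H.leg_natural (pullback.snd (leg X) p), reassoc_of% h2, projw, Category.comp_id]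
    have hu : bc p u uw ≫ subst _ = 𝟙 _ := by
      apply pullback.hom_ext
      · rw [Category.assoc, ← tr u uw _ (by simp [H.leg_natural, uw])]
        simp only [h1]
        rw [tl _ (by simp) _ (wkw _), hwk]
        simp
      · rw [Category.assoc, ← tr u uw _ (by simp [H.leg_natural, uw])]
        simp only [h2]
        rw [tl _ (by simp) _ projw, hproj]
        simp
    apply H.inj (g := leg X) _ _ (by simp [H.leg_natural, uw]) (by simp)
    rw [tr u uw, reassoc_of% hu]
    have : bc p (𝟙 (P.obj X)) (Category.id_comp (leg X)) = 𝟙 _ := by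
      apply pullback.hom_ext <;> simp
    rw [this, Category.id_comp]

theorem isLeftAdjoint_of_counit {A D : Type*} [Category A] [Category D] (F : A ⥤ D)
    (h : ∀ X : D, ∃ (G : A) (ε : F.obj G ⟶ X), ∀ Y : A,
      Function.Bijective (fun f : Y ⟶ G => F.map f ≫ ε)) : F.IsLeftAdjoint := by
  choose G ε hb using h
  exact (Adjunction.adjunctionOfEquivRight (F := F) (G_obj := G)
    (fun Y X => (Equiv.ofBijective _ (hb X Y)).symm) (by
      intro Y' Y X f g
      rw [Equiv.symm_apply_eq]
      have := (Equiv.ofBijective _ (hb X Y)).apply_symm_apply g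
      simp only [Equiv.ofBijective_apply] at this ⊢
      rw [F.map_comp, Category.assoc, this])).isLeftAdjoint

theorem isLeftAdjoint_of_isRep {P : C ⥤ C} {leg : ∀ X : C, P.obj X ⟶ B}
    {subst : ∀ X : C, pullback (leg X) p ⟶ X} (H : IsRep p P leg subst) :
    (Over.pullback p).IsLeftAdjoint := by
  obtain ⟨proj, projw, hproj⟩ := H.surj (𝟙 B) (pullback.snd (𝟙 B) p)
  have hp : ∀ {Y : C} (g : Y ⟶ B), bc p (g ≫ proj) (by simp [projw]) ≫ subst E =
      pullback.snd g p := by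
    intro Y g
    rw [← bc_comp p g (Category.comp_id g) proj projw, Category.assoc, hproj, bc_snd]
  have tr : ∀ {Y X X' : C} {g : Y ⟶ B} (f : Y ⟶ P.obj X) (w : f ≫ leg X = g) (h : X ⟶ X')
      (w' : (f ≫ P.map h) ≫ leg X' = g),
      bc p (f ≫ P.map h) w' ≫ subst X' = bc p f w ≫ subst X ≫ h := by
    intro Y X X' g f w h w'
    rw [← bc_comp p f w (P.map h) (H.leg_natural h), Category.assoc, H.subst_natural]
  apply isLeftAdjoint_of_counit
  intro X
  let q := P.map X.hom
  have cw : pullback.fst q proj ≫ leg X.left = pullback.snd q proj := by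
    rw [← H.leg_natural X.hom, pullback.condition_assoc, projw, Category.comp_id]
  have εw : (bc p (pullback.fst q proj) cw ≫ subst X.left) ≫ X.hom =
      pullback.snd (pullback.snd q proj) p := by
    rw [Category.assoc, ← tr _ cw X.hom (by rw [Category.assoc, H.leg_natural, cw])]
    have := pullback.condition (f := q) (g := proj)
    simp only [q] at this
    simp only [q, this]
    exact hp _
  let ε : (Over.pullback p).obj (Over.mk (pullback.snd q proj)) ⟶ X :=
    Over.homMk (bc p (pullback.fst q proj) cw ≫ subst X.left) εw
  refine ⟨Over.mk (pullback.snd q proj), ε, fun Y => ?_⟩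
  have calcε : ∀ f : Y ⟶ Over.mk (pullback.snd q proj),
      ((Over.pullback p).map f ≫ ε).left = bc p (f.left ≫ pullback.fst q proj)
        (by rw [Category.assoc, cw]; exact Over.w f) ≫ subst X.left := by
    intro f
    rw [← bc_comp p f.left (Over.w f) (pullback.fst q proj) cw, Category.assoc]
    rfl
  constructor
  · intro f f' h
    have h' := congrArg CommaMorphism.left h
    simp only [calcε] at h'
    have := H.inj _ _ _ _ h'
    ext
    apply pullback.hom_ext
    · exact this
    · exact (Over.w f).trans (Over.w f').symm
  · intro h
    obtain ⟨f, w, hf⟩ := H.surj Y.hom h.left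
    have e : f ≫ q = Y.hom ≫ proj := by
      apply H.inj (g := Y.hom) _ _ (by simp [q, H.leg_natural, w]) (by simp [projw])
      rw [hp, tr f w, reassoc_of% hf]
      exact Over.w h
    refine ⟨Over.homMk (pullback.lift f Y.hom e) (by simp), ?_⟩
    ext
    refine (calcε _).trans ?_
    simp [hf]

theorem isRep_of_isLeftAdjoint (h : (Over.pullback p).IsLeftAdjoint) :
    ∃ (P : C ⥤ C) (leg : ∀ X : C, P.obj X ⟶ B) (subst : ∀ X : C, pullback (leg X) p ⟶ X),
      IsRep p P leg subst := by
  let F : Over B ⥤ C := Over.pullback p ⋙ Over.forget E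
  let G : C ⥤ Over B := Over.star E ⋙ (Over.pullback p).rightAdjoint
  let adj : F ⊣ G := (Adjunction.ofIsLeftAdjoint (Over.pullback p)).comp (Over.forgetAdjStar E)
  clear_value adj G
  have : PreservesLimitsOfShape WalkingCospan G := by
    have := adj.rightAdjoint_preservesLimits
    infer_instance
  have lw : ∀ {X Y : C} (f : X ⟶ Y), (G ⋙ Over.forget B).map f ≫ (G.obj Y).hom = (G.obj X).hom :=
    fun f => Over.w (G.map f)
  have key : ∀ {X Y : C} {g : Y ⟶ B} (f : Y ⟶ (G.obj X).left) (w : f ≫ (G.obj X).hom = g),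
      bc p f w ≫ adj.counit.app X = (adj.homEquiv (Over.mk g) X).symm (Over.homMk f w) := by
    intro X Y g f w
    rw [Adjunction.homEquiv_counit]
    rfl
  refine ⟨G ⋙ Over.forget B, fun X => (G.obj X).hom, fun X => adj.counit.app X,
    inferInstance, lw, ?_, ?_, ?_⟩
  · intro X Y f
    exact adj.counit.naturality f
  · intro X Y g f f' w w' h
    have h2 := (key f w).symm.trans (h.trans (key f' w'))
    exact congrArg CommaMorphism.left ((adj.homEquiv (Over.mk g) X).symm.injective h2)
  · intro X Y g h
    let t := adj.homEquiv (Over.mk g) X h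
    refine ⟨t.left, Over.w t, ?_⟩
    refine (key t.left (Over.w t)).trans ?_
    exact (adj.homEquiv (Over.mk g) X).symm_apply_apply h

end

/-- For an arrow `p : E ⟶ B` in a cartesian category `C`, the following are
equivalent: (1) `p` is exponentiable, i.e. the pullback functor `p* : C/B ⥤ C/E` has a right
adjoint; (2) there exists a polynomial functor for `p`, i.e. a pullback-preserving endofunctor
`P : C ⥤ C` together with natural transformations `leg`, `wk`, `subst` and an arrow `proj`
satisfying axioms (P1)–(P4). -/
theorem exponentiable_iff_exists_polynomialFunctor
    {C : Type u} [Category.{v} C] [HasFiniteLimits C] {E B : C} (p : E ⟶ B) :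
    (Over.pullback p).IsLeftAdjoint ↔
      ∃ (P : C ⥤ C) (leg : ∀ X : C, P.obj X ⟶ B) (wk : ∀ X : C, X ⨯ B ⟶ P.obj X)
        (proj : B ⟶ P.obj E) (subst : ∀ X : C, pullback (leg X) p ⟶ X),
        IsPolynomialFor p P leg wk proj subst := by
  constructor
  · intro h
    obtain ⟨P, leg, subst, H⟩ := isRep_of_isLeftAdjoint p h
    obtain ⟨wk, proj, H'⟩ := poly_of_isRep p H
    exact ⟨P, leg, wk, proj, subst, H'⟩
  · rintro ⟨P, leg, wk, proj, subst, H⟩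
    exact isLeftAdjoint_of_isRep p (isRep_of_poly p H)
end

section
/- Let p : E → B be an exponentiable arrow in a cartesian category C and let (P, leg, wk, proj, subst) be any polynomial functor for p. Then the endofunctor P is isomorphic to the associated polynomial functor P_p = B_! ∘ p_* ∘ E*; moreover the isomorphism can be taken over B, i.e. compatible with the natural transformations leg of P and of P_p. -/
open CategoryTheory CategoryTheory.Limits

universe v u

variable {C : Type u} [Category.{v} C]

namespace IsPolynomialFor

variable [HasFiniteLimits C] {E B : C} {p : E ⟶ B}
    {P : C ⥤ C} {leg : ∀ X : C, P.obj X ⟶ B} {wk : ∀ X : C, X ⨯ B ⟶ P.obj X}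
    {proj : B ⟶ P.obj E} {subst : ∀ X : C, pullback (leg X) p ⟶ X}

/-- `P` as a functor to `Over B`. -/
def lift (h : IsPolynomialFor p P leg wk proj subst) : C ⥤ Over B where
  obj X := Over.mk (leg X)
  map f := Over.homMk (P.map f) (h.leg_natural _ _ f)

lemma isPb (h : IsPolynomialFor p P leg wk proj subst) {A : C} (a : A ⟶ B) :
    IsPullback (P.map (pullback.fst a p)) (P.map (pullback.snd a p)) (P.map a) (P.map p) := by
  have := h.preserves
  exact (IsPullback.of_hasPullback a p).map P

lemma eta_w (h : IsPolynomialFor p P leg wk proj subst) {A : C} (a : A ⟶ B) :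
    (prod.lift (𝟙 A) a ≫ wk A) ≫ P.map a = (a ≫ proj) ≫ P.map p := by
  rw [Category.assoc, Category.assoc, h.P1, ← h.wk_natural, ← Category.assoc, ← Category.assoc]
  congr 1
  ext <;> simp

/-- The unit. -/
noncomputable def eta (h : IsPolynomialFor p P leg wk proj subst) {A : C} (a : A ⟶ B) :
    A ⟶ P.obj (pullback a p) :=
  (h.isPb a).lift _ _ (h.eta_w a)

lemma eta_fst (h : IsPolynomialFor p P leg wk proj subst) {A : C} (a : A ⟶ B) :
    h.eta a ≫ P.map (pullback.fst a p) = prod.lift (𝟙 A) a ≫ wk A :=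
  (h.isPb a).lift_fst _ _ _

lemma eta_snd (h : IsPolynomialFor p P leg wk proj subst) {A : C} (a : A ⟶ B) :
    h.eta a ≫ P.map (pullback.snd a p) = a ≫ proj :=
  (h.isPb a).lift_snd _ _ _

lemma eta_leg (h : IsPolynomialFor p P leg wk proj subst) {A : C} (a : A ⟶ B) :
    h.eta a ≫ leg _ = a := by
  rw [← h.leg_natural _ _ (pullback.fst a p), ← Category.assoc, eta_fst, Category.assoc,
    h.wk_over, prod.lift_snd]

lemma eta_nat (h : IsPolynomialFor p P leg wk proj subst) {A A' : C} (a : A ⟶ B) (a' : A' ⟶ B)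
    (f : A ⟶ A') (u : pullback a p ⟶ pullback a' p)
    (hf : f ≫ a' = a)
    (h1 : u ≫ pullback.fst a' p = pullback.fst a p ≫ f)
    (h2 : u ≫ pullback.snd a' p = pullback.snd a p) :
    f ≫ h.eta a' = h.eta a ≫ P.map u := by
  apply (h.isPb a').hom_ext
  · rw [Category.assoc, Category.assoc, ← P.map_comp, h1, P.map_comp, eta_fst,
      reassoc_of% (h.eta_fst a), ← h.wk_natural, ← Category.assoc, ← Category.assoc]
    congr 1
    ext <;> simp [hf]
  · rw [Category.assoc, Category.assoc, ← P.map_comp, h2, eta_snd, eta_snd, ← hf, Category.assoc]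

/-- General form of substitution along a map over `B`. -/
lemma left_triangle (h : IsPolynomialFor p P leg wk proj subst) {A : C} (a : A ⟶ B)
    (u : pullback a p ⟶ pullback (leg (pullback a p)) p)
    (h1 : u ≫ pullback.fst _ p = pullback.fst a p ≫ h.eta a)
    (h2 : u ≫ pullback.snd _ p = pullback.snd a p) :
    u ≫ subst (pullback a p) = 𝟙 _ := by
  have key : ∀ {Y : C} (f : pullback a p ⟶ Y),
      u ≫ subst (pullback a p) ≫ f =
        pullback.lift (pullback.fst a p ≫ h.eta a ≫ P.map f) (pullback.snd a p)
          (by simp [h.leg_natural, h.eta_leg, pullback.condition]) ≫ subst Y := by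
    intro Y f
    rw [← h.subst_natural _ _ f (pullback.lift (pullback.fst _ p ≫ P.map f) (pullback.snd _ p)
          (by simp [h.leg_natural, pullback.condition])) (pullback.lift_fst _ _ _) (pullback.lift_snd _ _ _), ← Category.assoc]
    congr 1
    ext
    · simp [pullback.lift_fst, reassoc_of% h1]
    · simp [pullback.lift_snd, h2]
  ext
  · rw [Category.assoc, key]
    have h3 := h.P3 A (pullback.lift (pullback.fst _ p ≫ wk A) (pullback.snd _ p)
      (by simp [h.wk_over, pullback.condition])) (pullback.lift_fst _ _ _) (pullback.lift_snd _ _ _)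
    have h4 := congrArg (fun t => pullback.lift (pullback.fst a p ≫ prod.lift (𝟙 A) a)
      (pullback.snd a p) (by simp [prod.lift_snd, pullback.condition]) ≫ t) h3
    simp only [← Category.assoc, pullback.lift_fst] at h4
    simp only [Category.assoc, prod.lift_fst, Category.comp_id] at h4
    rw [Category.id_comp]
    refine Eq.trans ?_ h4
    refine Eq.trans ?_ (Category.assoc _ _ _)
    congr 1
    ext <;> simp [pullback.lift_fst, pullback.lift_snd, pullback.lift_fst_assoc, pullback.lift_snd_assoc, h.eta_fst, -prod.comp_lift]
  · rw [Category.assoc, key]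
    have h3 := h.P2 (pullback.lift (pullback.fst _ p ≫ proj) (pullback.snd _ p)
      (by rw [Category.assoc, h.proj_over, pullback.condition])) (pullback.lift_fst _ _ _) (pullback.lift_snd _ _ _)
    have h4 := congrArg (fun t => pullback.lift (pullback.fst a p ≫ a)
      (pullback.snd a p) (by simp [prod.lift_snd, pullback.condition]) ≫ t) h3
    simp only [pullback.lift_snd] at h4
    rw [Category.id_comp]
    refine Eq.trans ?_ h4
    refine Eq.trans ?_ (Category.assoc _ _ _)
    congr 1
    ext <;> simp [pullback.lift_fst, pullback.lift_snd, pullback.lift_fst_assoc, pullback.lift_snd_assoc, h.eta_snd]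

/-- The adjunction. -/
noncomputable def adj (h : IsPolynomialFor p P leg wk proj subst) :
    Over.pullback p ⋙ Over.forget E ⊣ h.lift :=
  Adjunction.mkOfUnitCounit
    { unit :=
        { app := fun A => Over.homMk (h.eta A.hom) (h.eta_leg A.hom)
          naturality := fun A A' f => by
            ext
            exact h.eta_nat A.hom A'.hom f.left _ (Over.w f) (pullback.lift_fst _ _ _) (pullback.lift_snd _ _ _) }
      counit :=
        { app := fun X => subst X
          naturality := fun X Y f =>
            h.subst_natural X Y f _ (pullback.lift_fst _ _ _) (pullback.lift_snd _ _ _) }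
      left_triangle := by
        ext A
        simp only [NatTrans.comp_app, Functor.whiskerRight_app, Functor.whiskerLeft_app,
          Functor.associator_hom_app, NatTrans.id_app, Category.id_comp]
        refine (congrArg (_ ≫ ·) (Category.id_comp _)).trans ?_
        exact h.left_triangle A.hom _ (pullback.lift_fst _ _ _) (pullback.lift_snd _ _ _)
      right_triangle := by
        ext X
        simp only [NatTrans.comp_app, Functor.whiskerRight_app, Functor.whiskerLeft_app,
          Functor.associator_inv_app, NatTrans.id_app, Category.id_comp]
        exact h.P4 X (h.eta (leg X)) (h.eta_fst _) (h.eta_snd _) }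

end IsPolynomialFor

/-- Let `p : E ⟶ B` be an exponentiable arrow in a cartesian category `C`
(witnessed by a pushforward `p_*` with `p* ⊣ p_*`), and let `(P, leg, wk, proj, subst)` be any
polynomial functor for `p`.  Then `P` is isomorphic to the associated polynomial functor
`P_p = B_! ∘ p_* ∘ E*`, and the isomorphism can be taken over `B`, i.e. compatible with the
natural transformation `leg` of `P` and the structure arrows of `P_p` (its `leg`). -/
theorem polynomialFunctor_iso_assocPoly
    {C : Type u} [Category.{v} C] [HasFiniteLimits C] {E B : C} (p : E ⟶ B)
    (pstar : Over E ⥤ Over B) (adj : Over.pullback p ⊣ pstar)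
    (P : C ⥤ C) (leg : ∀ X : C, P.obj X ⟶ B) (wk : ∀ X : C, X ⨯ B ⟶ P.obj X)
    (proj : B ⟶ P.obj E) (subst : ∀ X : C, pullback (leg X) p ⟶ X)
    (h : IsPolynomialFor p P leg wk proj subst) :
    ∃ i : P ≅ Over.star E ⋙ pstar ⋙ Over.forget B,
      ∀ X : C, i.hom.app X ≫ ((Over.star E ⋙ pstar).obj X).hom = leg X := by
  let e : IsPolynomialFor.lift h ≅ Over.star E ⋙ pstar :=
    (IsPolynomialFor.adj h).rightAdjointUniq (adj.comp (Over.forgetAdjStar E))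
  refine ⟨Functor.isoWhiskerRight e (Over.forget B), fun X => ?_⟩
  exact Over.w (e.hom.app X)
end

section
/- Let C be a cartesian category with an object B, let D be a cartesian category, and let G, H : C/B → D be cartesian functors with a natural transformation α : G ⟹ H. If the component α at B*X (the object (π₂ : X × B → B) of C/B) is an isomorphism for every object X of C, then α is an isomorphism. In other words, precomposition with B* : C → C/B reflects isomorphisms of natural transformations between cartesian functors C/B → D. -/
open CategoryTheory CategoryTheory.Limits

section aux
variable {C : Type*} [Category C] [HasFiniteLimits C] {B X T : C}

theorem aux_w (f : X ⟶ B) : prod.lift (𝟙 X) f ≫ prod.lift (prod.fst ≫ f) prod.snd =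
    prod.lift (𝟙 X) f ≫ (prod.lift prod.snd prod.snd : X ⨯ B ⟶ B ⨯ B) := by
  ext <;> simp only [Category.assoc, prod.lift_fst, prod.lift_snd, prod.lift_fst_assoc, Category.id_comp]

theorem aux_fst (f : X ⟶ B) (t : T ⟶ X ⨯ B)
    (h : t ≫ prod.lift (prod.fst ≫ f) prod.snd = t ≫ prod.lift prod.snd prod.snd) :
    t ≫ prod.fst ≫ f = t ≫ prod.snd := by
  simpa only [Category.assoc, prod.lift_fst] using congrArg (· ≫ prod.fst) h

theorem aux_fac (f : X ⟶ B) (t : T ⟶ X ⨯ B) (h : t ≫ prod.fst ≫ f = t ≫ prod.snd) :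
    (t ≫ prod.fst) ≫ prod.lift (𝟙 X) f = t := by
  apply prod.hom_ext
  · simp only [Category.assoc, prod.lift_fst, Category.comp_id]
  · simpa only [Category.assoc, prod.lift_snd] using h

theorem aux_uniq (f : X ⟶ B) (t : T ⟶ X ⨯ B) (m : T ⟶ X) (h : m ≫ prod.lift (𝟙 X) f = t) :
    m = t ≫ prod.fst := by
  rw [← h]
  simp only [Category.assoc, prod.lift_fst, Category.comp_id]

end aux
theorem isIso_app_of_fork {E D : Type*} [Category E] [Category D] (G H : E ⥤ D)
    [PreservesFiniteLimits G] [PreservesFiniteLimits H] (α : G ⟶ H)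
    {Y P Q : E} (i : Y ⟶ P) (u v : P ⟶ Q) (w : i ≫ u = i ≫ v)
    (hl : IsLimit (Fork.ofι i w)) [IsIso (α.app P)] [IsIso (α.app Q)] :
    IsIso (α.app Y) := by
  have hG := isLimitForkMapOfIsLimit G w hl
  have hH := isLimitForkMapOfIsLimit H w hl
  have e : (H.map i ≫ inv (α.app P)) ≫ G.map u = (H.map i ≫ inv (α.app P)) ≫ G.map v := by
    rw [← cancel_mono (α.app Q)]
    simp only [Category.assoc, NatTrans.naturality, IsIso.inv_hom_id_assoc]
    rw [← H.map_comp, ← H.map_comp, w]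
  obtain ⟨l, hl'⟩ := Fork.IsLimit.lift' hG _ e
  have hl2 : l ≫ G.map i = H.map i ≫ inv (α.app P) := hl'
  refine ⟨l, ?_, ?_⟩
  · refine Fork.IsLimit.hom_ext hG ?_
    change (α.app Y ≫ l) ≫ G.map i = 𝟙 _ ≫ G.map i
    rw [Category.assoc, hl2, ← NatTrans.naturality_assoc]
    simp
  · refine Fork.IsLimit.hom_ext hH ?_
    change (l ≫ α.app Y) ≫ H.map i = 𝟙 _ ≫ H.map i
    rw [Category.assoc, ← NatTrans.naturality, reassoc_of% hl2]
    simp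

/-- **Statement 11.** Let `C` be a cartesian category with an object `B`, let `D` be a
cartesian category, and let `G, H : C/B ⥤ D` be cartesian (finite-limit-preserving) functors
with a natural transformation `α : G ⟹ H`.  If the component of `α` at `B* X` — the object
`(π₂ : X × B → B)` of `C/B` — is an isomorphism for every object `X` of `C`, then `α` is an
isomorphism.  In other words, precomposition with `B* : C ⥤ C/B` reflects isomorphisms of
natural transformations between cartesian functors `C/B ⥤ D`. -/
theorem natTrans_isIso_of_isIso_on_star
    {C : Type*} [Category C] [HasFiniteLimits C] (B : C)
    {D : Type*} [Category D] [HasFiniteLimits D]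
    (G H : Over B ⥤ D) [PreservesFiniteLimits G] [PreservesFiniteLimits H]
    (α : G ⟶ H)
    (hα : ∀ X : C, IsIso (α.app (Over.mk (prod.snd : X ⨯ B ⟶ B)))) :
    IsIso α := by
  have key : ∀ Y : Over B, IsIso (α.app Y) := by
    intro Y
    let P : Over B := Over.mk (prod.snd : Y.left ⨯ B ⟶ B)
    let Q : Over B := Over.mk (prod.snd : B ⨯ B ⟶ B)
    let i : Y ⟶ P := Over.homMk (prod.lift (𝟙 _) Y.hom) (prod.lift_snd _ _)
    let u : P ⟶ Q := Over.homMk (prod.lift (prod.fst ≫ Y.hom) prod.snd) (prod.lift_snd _ _)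
    let v : P ⟶ Q := Over.homMk (prod.lift prod.snd prod.snd) (prod.lift_snd _ _)
    have w : i ≫ u = i ≫ v := by
      ext
      exact aux_w (B := B) Y.hom
    have : IsIso (α.app P) := hα _
    have : IsIso (α.app Q) := hα _
    refine isIso_app_of_fork G H α i u v w (Fork.IsLimit.mk' _ fun s => ?_)
    have hs1 := aux_fst (B := B) Y.hom s.ι.left (congrArg CommaMorphism.left s.condition)
    have hs2 : s.ι.left ≫ prod.snd = s.pt.hom := Over.w s.ι
    refine ⟨Over.homMk (s.ι.left ≫ prod.fst) ?_, ?_, ?_⟩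
    · exact (Category.assoc _ _ _).trans (hs1.trans hs2)
    · ext
      exact aux_fac (B := B) Y.hom s.ι.left hs1
    · intro m hm
      ext
      exact aux_uniq (B := B) Y.hom s.ι.left m.left (congrArg CommaMorphism.left hm)
  exact NatIso.isIso_of_isIso_app α
end
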